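/- Fix n ≥ 1 and any weight function c : Fin (2n − 1) × Hexatag → ℝ. A binary head tree T* with n leaves maximizes the total score Σₖ c(k, hexatags(T)ₖ) over all BHTs T with n leaves if and only if the list hexatags(T*) maximizes Σₖ c(k, τₖ) over all valid hexatag lists τ of length 2n − 1; in particular, both maxima exist and are equal (exactness of decoding over valid sequences). -/

import Mathlib

/-- Binary head trees (BHTs). -/
inductive BHT : Type where
  | leaf : BHT
  | nodeL (l r : BHT) : BHT
  | nodeR (l r : BHT) : BHT

/-- Number of leaves of a BHT. -/
def BHT.numLeaves : BHT → ℕ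
  | .leaf => 1
  | .nodeL l r => l.numLeaves + r.numLeaves
  | .nodeR l r => l.numLeaves + r.numLeaves

/-- Head position of a BHT whose span of leaf positions starts at `i`. -/
def BHT.headAt : BHT → ℕ → ℕ
  | .leaf, i => i
  | .nodeL l _, i => l.headAt i
  | .nodeR l r, i => r.headAt (i + l.numLeaves)

/-- Head position of a BHT placed over positions `0, …, numLeaves - 1`. -/
def BHT.head (T : BHT) : ℕ := T.headAt 0

/-- Arc set of a BHT whose span of leaf positions starts at `i`. -/
def BHT.arcsAt : BHT → ℕ → Set (ℕ × ℕ)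
  | .leaf, _ => ∅
  | .nodeL l r, i =>
      insert (l.headAt i, r.headAt (i + l.numLeaves)) (l.arcsAt i ∪ r.arcsAt (i + l.numLeaves))
  | .nodeR l r, i =>
      insert (r.headAt (i + l.numLeaves), l.headAt i) (l.arcsAt i ∪ r.arcsAt (i + l.numLeaves))

/-- Arc set of a BHT placed over positions `0, …, numLeaves - 1`. -/
def BHT.arcs (T : BHT) : Set (ℕ × ℕ) := T.arcsAt 0

/-- `S` is a subtree of `T` (placed over positions `0, …, numLeaves - 1`) whose
leaf span starts at absolute position `i`. -/
inductive BHT.SubtreeAt : BHT → ℕ → BHT → Prop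
  | refl (T : BHT) : BHT.SubtreeAt T 0 T
  | inlL (l r S : BHT) (i : ℕ) : BHT.SubtreeAt l i S → BHT.SubtreeAt (BHT.nodeL l r) i S
  | inrL (l r S : BHT) (i : ℕ) :
      BHT.SubtreeAt r i S → BHT.SubtreeAt (BHT.nodeL l r) (l.numLeaves + i) S
  | inlR (l r S : BHT) (i : ℕ) : BHT.SubtreeAt l i S → BHT.SubtreeAt (BHT.nodeR l r) i S
  | inrR (l r S : BHT) (i : ℕ) :
      BHT.SubtreeAt r i S → BHT.SubtreeAt (BHT.nodeR l r) (l.numLeaves + i) S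

/-- `bht2dep T j = some i` if `i` is the unique position with `(i, j) ∈ arcs T`,
and `none` if `j` has no incoming arc. -/
noncomputable def bht2dep (n : ℕ) (T : BHT) : Fin n → Option (Fin n) := fun j =>
  letI := Classical.dec (∃! i : Fin n, ((i : ℕ), (j : ℕ)) ∈ T.arcs)
  if h : ∃! i : Fin n, ((i : ℕ), (j : ℕ)) ∈ T.arcs then some h.choose else none

/-- `head` is a dependency tree on `n` words: exactly one root (position with
`head r = none`), and every position reaches the root by iterating `head`. -/
def IsDepTree {n : ℕ} (head : Fin n → Option (Fin n)) : Prop :=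
  ∃ r : Fin n, head r = none ∧ (∀ r' : Fin n, head r' = none → r' = r) ∧
    ∀ j : Fin n, Relation.ReflTransGen (fun a b => head a = some b) j r

/-- A dependency tree is projective if every position's set of descendants is an
interval of consecutive positions. -/
def Projective {n : ℕ} (head : Fin n → Option (Fin n)) : Prop :=
  ∀ i : Fin n, ∃ a b : Fin n,
    ∀ j : Fin n, Relation.ReflTransGen (fun x y => head x = some y) j i ↔ (a ≤ j ∧ j ≤ b)

/-- The six hexatags: `tL`/`tR` are terminal tags (leaf that is a left/right child);
`leftL`/`leftR` are `⇐L`/`⇐R` (internal left child with head-label L/R);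
`rightL`/`rightR` are `⇒L`/`⇒R` (internal right child with head-label L/R). -/
inductive Hexatag : Type where
  | tL | tR | leftL | leftR | rightL | rightR
deriving DecidableEq

/-- A hexatag is terminal if it is `tL` or `tR`. -/
def Hexatag.isTerminal : Hexatag → Prop
  | .tL => True
  | .tR => True
  | _ => False

/-- In-order linearization; the Boolean records whether the current subtree is a
right child of its parent (the root counts as a left child by convention). -/
def BHT.hexatagsAux : BHT → Bool → List Hexatag
  | .leaf, false => [.tL]
  | .leaf, true => [.tR]
  | .nodeL l r, b =>
      l.hexatagsAux false ++ (if b then Hexatag.rightL else Hexatag.leftL) :: r.hexatagsAux true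
  | .nodeR l r, b =>
      l.hexatagsAux false ++ (if b then Hexatag.rightR else Hexatag.leftR) :: r.hexatagsAux true

/-- The hexatag linearization of a BHT. -/
def BHT.hexatags (T : BHT) : List Hexatag := T.hexatagsAux false

/-- The tags emitted for the leaves of a BHT, in left-to-right order. -/
def BHT.leafTagsAux : BHT → Bool → List Hexatag
  | .leaf, false => [.tL]
  | .leaf, true => [.tR]
  | .nodeL l r, _ => l.leafTagsAux false ++ r.leafTagsAux true
  | .nodeR l r, _ => l.leafTagsAux false ++ r.leafTagsAux true

/-- The tags emitted for the leaves of a BHT in left-to-right order (root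
counts as a left child by convention). -/
def BHT.leafTags (T : BHT) : List Hexatag := T.leafTagsAux false

/-- Partial BHTs: binary head trees possibly containing a dummy placeholder. -/
inductive PBHT : Type where
  | dummy : PBHT
  | leaf : PBHT
  | nodeL (l r : PBHT) : PBHT
  | nodeR (l r : PBHT) : PBHT
deriving DecidableEq

/-- Does a partial BHT contain a dummy? -/
def PBHT.hasDummy : PBHT → Bool
  | .dummy => true
  | .leaf => false
  | .nodeL l r => l.hasDummy || r.hasDummy
  | .nodeR l r => l.hasDummy || r.hasDummy

/-- Substitute `u` for the dummy in a partial BHT. -/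
def PBHT.subst : PBHT → PBHT → PBHT
  | .dummy, u => u
  | .leaf, _ => .leaf
  | .nodeL l r, u => .nodeL (l.subst u) (r.subst u)
  | .nodeR l r, u => .nodeR (l.subst u) (r.subst u)

/-- One step of the left-corner decoder on a stack of partial BHTs. -/
def hexStep : List PBHT → Hexatag → Option (List PBHT)
  | st, .tL => some (.leaf :: st)
  | t :: st, .tR => if t.hasDummy then some (t.subst .leaf :: st) else none
  | t :: st, .leftL => some (.nodeL t .dummy :: st)
  | t :: st, .leftR => some (.nodeR t .dummy :: st)
  | t :: u :: st, .rightL =>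
      if u.hasDummy then some (u.subst (.nodeL t .dummy) :: st) else none
  | t :: u :: st, .rightR =>
      if u.hasDummy then some (u.subst (.nodeR t .dummy) :: st) else none
  | _, _ => none

/-- The left-corner decoder: run the stack operations; succeed iff every
operation is defined and the final stack is a single dummy-free tree. -/
def tags2bht (τ : List Hexatag) : Option PBHT :=
  match τ.foldlM hexStep ([] : List PBHT) with
  | some [t] => if t.hasDummy then none else some t
  | _ => none

/-- Embedding of BHTs into partial BHTs. -/
def BHT.toPBHT : BHT → PBHT
  | .leaf => .leaf
  | .nodeL l r => .nodeL l.toPBHT r.toPBHT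
  | .nodeR l r => .nodeR l.toPBHT r.toPBHT

/-- Stack-count increment of a hexatag. -/
def Hexatag.delta : Hexatag → ℤ
  | .tL => 1
  | .tR => 0
  | .leftL => 0
  | .leftR => 0
  | .rightL => -1
  | .rightR => -1

/-- Running stack count `sₖ` after the first `k` tags of `τ`. -/
def stackCount (τ : List Hexatag) (k : ℕ) : ℤ :=
  ((τ.take k).map Hexatag.delta).sum

/-- Validity of a hexatag list (0-indexed: Lean index `k` is 1-indexed position `k+1`). -/
def ValidTags (τ : List Hexatag) : Prop :=
  (τ.length % 2 = 1 ∧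
    ∀ k : ℕ, ∀ t : Hexatag, τ[k]? = some t →
      (k % 2 = 0 → t.isTerminal) ∧ (k % 2 = 1 → ¬ t.isTerminal)) ∧
  τ[0]? = some Hexatag.tL ∧
  (∀ k : ℕ, ∀ t : Hexatag, τ[k]? = some t →
    (t = Hexatag.rightL ∨ t = Hexatag.rightR) → 2 ≤ stackCount τ k) ∧
  stackCount τ τ.length = 1

/-- Total score of a hexatag list of length `2n - 1` under position-wise weights `c`. -/
noncomputable def score (n : ℕ) (c : Fin (2 * n - 1) × Hexatag → ℝ) (τ : List Hexatag) : ℝ :=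
  ∑ k : Fin (2 * n - 1), c (k, τ.getD (k : ℕ) Hexatag.tL)

/-- Recursive form of validity; `b` says whether the next tag must be terminal. -/
def OkFrom : Bool → ℤ → List Hexatag → Prop
  | b, s, [] => s = 1 ∧ b = false
  | b, s, t :: τ => (t.isTerminal ↔ b = true) ∧
      ((t = Hexatag.rightL ∨ t = Hexatag.rightR) → 2 ≤ s) ∧ OkFrom (!b) (s + t.delta) τ

/-- Explicit indexed form of `OkFrom`. -/
def OkIdx (b : Bool) (s : ℤ) (τ : List Hexatag) : Prop :=
  (τ.length % 2 = if b then 1 else 0) ∧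
  (∀ k : ℕ, ∀ t : Hexatag, τ[k]? = some t → (t.isTerminal ↔ (k % 2 = if b then 0 else 1))) ∧
  (∀ k : ℕ, ∀ t : Hexatag, τ[k]? = some t →
    (t = Hexatag.rightL ∨ t = Hexatag.rightR) → 2 ≤ s + stackCount τ k) ∧
  s + stackCount τ τ.length = 1

theorem stackCount_cons (t : Hexatag) (τ : List Hexatag) (k : ℕ) :
    stackCount (t :: τ) (k + 1) = t.delta + stackCount τ k := by
  simp [stackCount]

theorem stackCount_zero (τ : List Hexatag) : stackCount τ 0 = 0 := by
  simp [stackCount]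

theorem okIdx_iff (τ : List Hexatag) : ∀ (b : Bool) (s : ℤ), OkIdx b s τ ↔ OkFrom b s τ := by
  induction τ with
  | nil =>
    intro b s
    cases b <;> simp [OkIdx, OkFrom, stackCount]
  | cons t τ ih =>
    intro b s
    rw [OkFrom, ← ih]
    unfold OkIdx
    constructor
    · rintro ⟨h1, h2, h3, h4⟩
      refine ⟨?_, ?_, ?_, ?_, ?_, ?_⟩
      · have := h2 0 t (by simp)
        cases b <;> simpa using this
      · intro h
        simpa [stackCount_zero] using h3 0 t (by simp) h
      · rw [List.length_cons] at h1
        cases b <;> simp at h1 ⊢ <;> omega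
      · intro k u hk
        rw [h2 (k + 1) u (by simpa using hk)]
        cases b <;> simp <;> omega
      · intro k u hk hu
        have := h3 (k + 1) u (by simpa using hk) hu
        rw [stackCount_cons] at this
        linarith
      · rw [List.length_cons, stackCount_cons] at h4
        linarith
    · rintro ⟨g1, g2, h1, h2, h3, h4⟩
      refine ⟨?_, ?_, ?_, ?_⟩
      · rw [List.length_cons]
        cases b <;> simp at h1 ⊢ <;> omega
      · intro k u hk
        cases k with
        | zero =>
          simp at hk
          subst hk
          rw [g1]
          cases b <;> simp
        | succ k =>
          rw [h2 k u (by simpa using hk)]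
          cases b <;> simp <;> omega
      · intro k u hk hu
        cases k with
        | zero =>
          simp at hk
          subst hk
          simpa [stackCount_zero] using g2 hu
        | succ k =>
          have := h3 k u (by simpa using hk) hu
          rw [stackCount_cons]
          linarith
      · rw [List.length_cons, stackCount_cons]
        linarith

theorem validTags_iff (τ : List Hexatag) :
    ValidTags τ ↔ τ[0]? = some Hexatag.tL ∧ OkFrom true 0 τ := by
  rw [← okIdx_iff]
  unfold ValidTags OkIdx
  simp only [zero_add, if_true]
  constructor
  · rintro ⟨⟨h1, h2⟩, h3, h4, h5⟩
    refine ⟨h3, h1, ?_, h4, h5⟩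
    intro k t hk
    obtain ⟨a, b⟩ := h2 k t hk
    refine ⟨fun h => ?_, a⟩
    by_contra hne
    exact b (by omega) h
  · rintro ⟨h3, h1, h2, h4, h5⟩
    refine ⟨⟨h1, fun k t hk => ⟨(h2 k t hk).2, fun h h' => ?_⟩⟩, h3, h4, h5⟩
    have := (h2 k t hk).1 h'
    omega

theorem okFrom_tree (T : BHT) : ∀ (τ : List Hexatag) (s : ℤ),
    (0 ≤ s → (OkFrom true s (T.hexatagsAux false ++ τ) ↔ OkFrom false (s + 1) τ)) ∧
    (1 ≤ s → (OkFrom true s (T.hexatagsAux true ++ τ) ↔ OkFrom false s τ)) := by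
  induction T with
  | leaf =>
    intro τ s
    simp [BHT.hexatagsAux, OkFrom, Hexatag.isTerminal, Hexatag.delta]
  | nodeL l r ihl ihr =>
    intro τ s
    constructor
    · intro hs
      simp only [BHT.hexatagsAux, List.append_assoc, List.cons_append]
      rw [(ihl _ s).1 hs, ← (ihr τ (s + 1)).2 (by omega)]
      simp [OkFrom, Hexatag.isTerminal, Hexatag.delta]
    · intro hs
      simp only [BHT.hexatagsAux, List.append_assoc, List.cons_append]
      rw [(ihl _ s).1 (by omega), ← (ihr τ s).2 (by omega)]
      simp [OkFrom, Hexatag.isTerminal, Hexatag.delta]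
      intro _
      omega
  | nodeR l r ihl ihr =>
    intro τ s
    constructor
    · intro hs
      simp only [BHT.hexatagsAux, List.append_assoc, List.cons_append]
      rw [(ihl _ s).1 hs, ← (ihr τ (s + 1)).2 (by omega)]
      simp [OkFrom, Hexatag.isTerminal, Hexatag.delta]
    · intro hs
      simp only [BHT.hexatagsAux, List.append_assoc, List.cons_append]
      rw [(ihl _ s).1 (by omega), ← (ihr τ s).2 (by omega)]
      simp [OkFrom, Hexatag.isTerminal, Hexatag.delta]
      intro _
      omega

theorem hexatags_head (T : BHT) : ∃ τ, T.hexatagsAux false = Hexatag.tL :: τ := by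
  induction T with
  | leaf => exact ⟨[], rfl⟩
  | nodeL l r ihl ihr =>
    obtain ⟨τ, h⟩ := ihl
    simp [BHT.hexatagsAux, h]
  | nodeR l r ihl ihr =>
    obtain ⟨τ, h⟩ := ihl
    simp [BHT.hexatagsAux, h]

theorem hexatags_valid (T : BHT) : ValidTags T.hexatags := by
  rw [validTags_iff]
  constructor
  · obtain ⟨τ, h⟩ := hexatags_head T
    simp [BHT.hexatags, h]
  · have := (okFrom_tree T [] 0).1 le_rfl
    rw [List.append_nil] at this
    rw [BHT.hexatags, this]
    simp [OkFrom]

theorem hexatags_length (T : BHT) : ∀ b, (T.hexatagsAux b).length + 1 = 2 * T.numLeaves := by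
  induction T with
  | leaf => intro b; cases b <;> rfl
  | nodeL l r ihl ihr =>
    intro b
    have h1 := ihl false
    have h2 := ihr true
    simp only [BHT.hexatagsAux, BHT.numLeaves, List.length_append, List.length_cons]
    omega
  | nodeR l r ihl ihr =>
    intro b
    have h1 := ihl false
    have h2 := ihr true
    simp only [BHT.hexatagsAux, BHT.numLeaves, List.length_append, List.length_cons]
    omega

/-- `p` is the tag prefix of a partial tree with one open right-child slot at its end. -/
def IsCtx (p : List Hexatag) : Prop :=
  ∀ r : BHT, ∃ T : BHT, T.hexatagsAux false = p ++ r.hexatagsAux true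

theorem decode_exists (τ : List Hexatag) : ∀ (st : List (List Hexatag)), (∀ p ∈ st, IsCtx p) →
    (st ≠ [] → OkFrom true st.length τ →
      ∃ T : BHT, T.hexatagsAux false = st.reverse.flatten ++ τ) ∧
    (∀ t : BHT, OkFrom false (st.length + 1) τ →
      ∃ T : BHT, T.hexatagsAux false = st.reverse.flatten ++ (t.hexatagsAux false ++ τ)) := by
  induction τ with
  | nil =>
    intro st hst
    constructor
    · intro _ h
      simp [OkFrom] at h
    · intro t h
      simp [OkFrom] at h
      subst h
      exact ⟨t, by simp⟩
  | cons a τ ih =>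
    intro st hst
    constructor
    · intro hne h
      obtain ⟨h1, h2, h3⟩ := h
      cases a <;> simp [Hexatag.isTerminal] at h1
      · obtain ⟨T, hT⟩ := (ih st hst).2 .leaf (by simpa [Hexatag.delta] using h3)
        exact ⟨T, by simpa [BHT.hexatagsAux] using hT⟩
      · cases st with
        | nil => exact absurd rfl hne
        | cons p st =>
          obtain ⟨t, ht⟩ := hst p (by simp) .leaf
          obtain ⟨T, hT⟩ := (ih st (fun q hq => hst q (by simp [hq]))).2 t
            (by simpa [Hexatag.delta] using h3)
          exact ⟨T, by simpa [ht, BHT.hexatagsAux] using hT⟩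
    · intro t h
      obtain ⟨h1, h2, h3⟩ := h
      have left : ∀ x, IsCtx (t.hexatagsAux false ++ [x]) → OkFrom true (st.length + 1) τ →
          ∃ T : BHT, T.hexatagsAux false =
            st.reverse.flatten ++ (t.hexatagsAux false ++ x :: τ) := by
        intro x hx hok
        obtain ⟨T, hT⟩ := (ih ((t.hexatagsAux false ++ [x]) :: st) (by
          intro q hq
          rcases List.mem_cons.1 hq with rfl | hq
          · exact hx
          · exact hst q hq)).1 (by simp) (by simpa using hok)
        exact ⟨T, by simpa using hT⟩
      have right : ∀ x, (∀ p, IsCtx p → IsCtx (p ++ (t.hexatagsAux false ++ [x]))) →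
          (2 : ℤ) ≤ st.length + 1 → OkFrom true st.length τ →
          ∃ T : BHT, T.hexatagsAux false =
            st.reverse.flatten ++ (t.hexatagsAux false ++ x :: τ) := by
        intro x hx h2 hok
        cases st with
        | nil => simp at h2
        | cons p st =>
          obtain ⟨T, hT⟩ := (ih ((p ++ (t.hexatagsAux false ++ [x])) :: st) (by
            intro q hq
            rcases List.mem_cons.1 hq with rfl | hq
            · exact hx p (hst p (by simp))
            · exact hst q (by simp [hq]))).1 (by simp) (by simpa using hok)
          exact ⟨T, by simpa using hT⟩
      cases a <;> simp [Hexatag.isTerminal] at h1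
      · exact left _ (fun r => ⟨.nodeL t r, by simp [BHT.hexatagsAux]⟩)
          (by simpa [Hexatag.delta] using h3)
      · exact left _ (fun r => ⟨.nodeR t r, by simp [BHT.hexatagsAux]⟩)
          (by simpa [Hexatag.delta] using h3)
      · refine right _ (fun p hp r => ?_) (h2 (by simp)) (by simpa [Hexatag.delta] using h3)
        obtain ⟨T, hT⟩ := hp (.nodeL t r)
        exact ⟨T, by simp [hT, BHT.hexatagsAux]⟩
      · refine right _ (fun p hp r => ?_) (h2 (by simp)) (by simpa [Hexatag.delta] using h3)
        obtain ⟨T, hT⟩ := hp (.nodeR t r)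
        exact ⟨T, by simp [hT, BHT.hexatagsAux]⟩

theorem valid_exists (τ : List Hexatag) (h : ValidTags τ) : ∃ T : BHT, T.hexatags = τ := by
  rw [validTags_iff] at h
  obtain ⟨h0, h⟩ := h
  cases τ with
  | nil => simp at h0
  | cons a τ =>
    simp at h0
    subst h0
    obtain ⟨T, hT⟩ := (decode_exists τ [] (by simp)).2 .leaf
      (by simpa [Hexatag.delta] using h.2.2)
    exact ⟨T, by simpa [BHT.hexatags, BHT.hexatagsAux] using hT⟩

theorem exists_tree (n : ℕ) : ∃ T : BHT, T.numLeaves = n + 1 := by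
  induction n with
  | zero => exact ⟨.leaf, rfl⟩
  | succ n ih =>
    obtain ⟨T, hT⟩ := ih
    exact ⟨.nodeL T .leaf, by simp [BHT.numLeaves, hT]⟩

theorem hexatag_finite : Finite Hexatag := by
  refine Set.finite_univ_iff.1 (Set.Finite.subset (Set.toFinite
    {Hexatag.tL, Hexatag.tR, Hexatag.leftL, Hexatag.leftR, Hexatag.rightL, Hexatag.rightR}) ?_)
  intro x _
  cases x <;> simp

theorem decoding_exact (n : ℕ) (hn : 1 ≤ n) (c : Fin (2 * n - 1) × Hexatag → ℝ) :
    (∀ Tstar : BHT, Tstar.numLeaves = n →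
      ((∀ T : BHT, T.numLeaves = n → score n c T.hexatags ≤ score n c Tstar.hexatags) ↔
        (∀ τ : List Hexatag, τ.length = 2 * n - 1 → ValidTags τ →
          score n c τ ≤ score n c Tstar.hexatags))) ∧
    ∃ T0 : BHT, T0.numLeaves = n ∧
      (∀ T : BHT, T.numLeaves = n → score n c T.hexatags ≤ score n c T0.hexatags) ∧
      ∃ τ0 : List Hexatag, τ0.length = 2 * n - 1 ∧ ValidTags τ0 ∧
        (∀ τ : List Hexatag, τ.length = 2 * n - 1 → ValidTags τ → score n c τ ≤ score n c τ0) ∧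
        score n c τ0 = score n c T0.hexatags := by
  have hlen : ∀ T : BHT, T.numLeaves = n → T.hexatags.length = 2 * n - 1 := by
    intro T hT
    have := hexatags_length T false
    rw [BHT.hexatags]
    omega
  have hdec : ∀ τ : List Hexatag, τ.length = 2 * n - 1 → ValidTags τ →
      ∃ T : BHT, T.numLeaves = n ∧ T.hexatags = τ := by
    intro τ hτ hv
    obtain ⟨T, rfl⟩ := valid_exists τ hv
    refine ⟨T, ?_, rfl⟩
    have := hexatags_length T false
    rw [BHT.hexatags] at hτ
    omega
  refine ⟨?_, ?_⟩
  · intro Ts hTs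
    constructor
    · intro h τ hτ hv
      obtain ⟨T, hT, rfl⟩ := hdec τ hτ hv
      exact h T hT
    · intro h T hT
      exact h _ (hlen T hT) (hexatags_valid T)
  · have := hexatag_finite
    have hfin : {τ : List Hexatag | τ.length = 2 * n - 1 ∧ ValidTags τ}.Finite :=
      (List.finite_length_eq Hexatag (2 * n - 1)).subset (fun τ h => h.1)
    obtain ⟨T1, hT1⟩ := exists_tree (n - 1)
    have hT1' : T1.numLeaves = n := by omega
    obtain ⟨τ0, ⟨h1, h2⟩, hmax⟩ := Set.exists_max_image _ (score n c) hfin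
      ⟨T1.hexatags, hlen T1 hT1', hexatags_valid T1⟩
    obtain ⟨T0, hT0, rfl⟩ := hdec τ0 h1 h2
    exact ⟨T0, hT0, fun T hT => hmax _ ⟨hlen T hT, hexatags_valid T⟩, _, h1, h2,
      fun τ a b => hmax τ ⟨a, b⟩, rfl⟩
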